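/- arXiv:1503.03040 — 4 statements merged into one kernel-verified Lean document; each statement's English description precedes it below -/
import Mathlib

section
/- Let 𝔤 be a finite-dimensional real Lie algebra of dimension n ≥ 2, Δ ⊆ 𝔤 a Lie subalgebra of dimension n−1, and D : 𝔤 → 𝔤 a derivation with D(Δ) ⊄ Δ. Then W = Δ ∩ D⁻¹Δ is a Lie subalgebra of 𝔤 of dimension n−2. -/
/-- If Δ is a codimension-one Lie subalgebra of an n-dimensional real Lie
algebra (n ≥ 2) and D is a derivation with D(Δ) ⊄ Δ, then W = Δ ∩ D⁻¹Δ is a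
Lie subalgebra of dimension n − 2. -/
theorem W_is_subalgebra_of_dim
    {L : Type*} [LieRing L] [LieAlgebra ℝ L] [FiniteDimensional ℝ L]
    (n : ℕ) (hn2 : 2 ≤ n) (hn : Module.finrank ℝ L = n)
    (Δ : Submodule ℝ L) (hΔdim : Module.finrank ℝ Δ = n - 1)
    (hΔalg : ∀ X ∈ Δ, ∀ Y ∈ Δ, ⁅X, Y⁆ ∈ Δ)
    (D : L →ₗ[ℝ] L) (hD : ∀ X Y : L, D ⁅X, Y⁆ = ⁅D X, Y⁆ + ⁅X, D Y⁆)
    (hDΔ : ¬ (∀ X ∈ Δ, D X ∈ Δ)) :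
    (∀ X ∈ Δ ⊓ Δ.comap D, ∀ Y ∈ Δ ⊓ Δ.comap D, ⁅X, Y⁆ ∈ Δ ⊓ Δ.comap D) ∧
    Module.finrank ℝ (Δ ⊓ Δ.comap D : Submodule ℝ L) = n - 2 := by
  refine ⟨?_, ?_⟩
  · rintro X ⟨hX, hX'⟩ Y ⟨hY, hY'⟩
    refine ⟨hΔalg X hX Y hY, ?_⟩
    change D ⁅X, Y⁆ ∈ Δ
    rw [hD]
    exact Δ.add_mem (hΔalg _ hX' _ hY) (hΔalg _ hX _ hY')
  · let f : Δ →ₗ[ℝ] L ⧸ Δ := Δ.mkQ ∘ₗ D ∘ₗ Δ.subtype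
    have hW : Δ ⊓ Δ.comap D = (LinearMap.ker f).map Δ.subtype := by
      ext x
      simp [f, and_comm]
    have hq := Δ.finrank_quotient_add_finrank
    have hr := f.finrank_range_add_finrank_ker
    have hle := Submodule.finrank_le (LinearMap.range f)
    have hne : Module.finrank ℝ (LinearMap.range f) ≠ 0 := by
      intro h0
      have h1 : f = 0 := LinearMap.range_eq_bot.1 (Submodule.finrank_eq_zero.1 h0)
      apply hDΔ
      intro X hX
      have h2 := LinearMap.congr_fun h1 ⟨X, hX⟩
      simpa [f] using h2
    rw [hW, Submodule.finrank_map_subtype_eq]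
    omega
end

section
/- Let G be a group, V a vector space over a field K, ρ : G → GL(V) a linear representation, and F : G → V a map satisfying the cocycle identity F(g′g) = F(g) + ρ(g⁻¹)(F(g′)) for all g, g′ ∈ G. Let Δ ⊆ V be a linear subspace and Z = {g ∈ G : F(g) ∈ Δ}. Then Z is a subgroup of G if and only if for all g, g′ ∈ Z one has ρ(g′)(F(g)) ∈ Δ. -/
/-- Abstract criterion for the singular locus to be a subgroup: if
F : G → V satisfies the cocycle identity F(g′g) = F(g) + ρ(g⁻¹)(F(g′)) for a
representation ρ : G → GL(V), and Z = {g : F(g) ∈ Δ}, then Z is a subgroup of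
G if and only if ρ(g′)(F(g)) ∈ Δ for all g, g′ ∈ Z. -/
theorem singular_locus_subgroup_iff
    {G : Type*} [Group G] {K : Type*} [Field K] {V : Type*}
    [AddCommGroup V] [Module K V]
    (ρ : G →* (V ≃ₗ[K] V)) (F : G → V)
    (hF : ∀ g g' : G, F (g' * g) = F g + ρ g⁻¹ (F g'))
    (Δ : Submodule K V) (Z : Set G) (hZ : Z = {g : G | F g ∈ Δ}) :
    (∃ H : Subgroup G, (H : Set G) = Z) ↔
      (∀ g ∈ Z, ∀ g' ∈ Z, ρ g' (F g) ∈ Δ) := by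
  subst hZ
  have h1 : F 1 = 0 := by
    have h := hF 1 1
    rw [inv_one, map_one, mul_one] at h
    exact left_eq_add.mp h
  have hinv : ∀ g, F g⁻¹ = -(ρ g (F g)) := by
    intro g
    have h := hF g⁻¹ g
    rw [mul_inv_cancel, h1, inv_inv] at h
    exact eq_neg_of_add_eq_zero_left h.symm
  constructor
  · rintro ⟨H, hH⟩ g hg g' hg'
    have hi : g'⁻¹ ∈ (H : Set G) := H.inv_mem (hH.symm ▸ hg' : g' ∈ (H : Set G))
    have hm : g * g'⁻¹ ∈ (H : Set G) :=
      H.mul_mem (hH.symm ▸ hg : g ∈ (H : Set G)) hi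
    rw [hH] at hi hm
    have hm' : F (g * g'⁻¹) ∈ Δ := hm
    rw [hF, inv_inv] at hm'
    exact (Δ.add_mem_iff_right hi).mp hm'
  · intro h
    have hi : ∀ g, F g ∈ Δ → F g⁻¹ ∈ Δ := by
      intro g hg
      rw [hinv]
      exact Δ.neg_mem (h g hg g hg)
    refine ⟨{ carrier := {g | F g ∈ Δ}, mul_mem' := ?_, one_mem' := ?_, inv_mem' := ?_ }, rfl⟩
    · intro a b ha hb
      change F (a * b) ∈ Δ
      rw [hF]
      exact Δ.add_mem hb (h a ha b⁻¹ (hi b hb))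
    · change F 1 ∈ Δ
      rw [h1]
      exact Δ.zero_mem
    · intro g hg
      exact hi g hg
end

section
/- Let H = [[1,0],[0,−1]], X = [[0,1],[0,0]], Y = [[0,0],[1,0]] in the 2×2 real matrices, and let g = [[a,b],[c,d]] with ad − bc = 1. Then the three matrices gY − Yg, gH, gX are linearly dependent over ℝ if and only if a² = 1; equivalently, Y − g⁻¹Yg belongs to the span of {H, X} if and only if a = ±1. -/
/-- Singular locus of the ARS on SL(2,ℝ) defined by Δ = span{H,X} and
D = −ad(Y): for g = [[a,b],[c,d]] with det g = 1, the matrices gY − Yg, gH, gX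
are linearly dependent iff a² = 1; equivalently Y − g⁻¹Yg ∈ span{H,X} iff
a = ±1. -/
theorem singular_locus_SL2_first
    (a b c d : ℝ) (hdet : a * d - b * c = 1)
    (H : Matrix (Fin 2) (Fin 2) ℝ) (hH : H = !![1, 0; 0, -1])
    (X : Matrix (Fin 2) (Fin 2) ℝ) (hX : X = !![0, 1; 0, 0])
    (Y : Matrix (Fin 2) (Fin 2) ℝ) (hY : Y = !![0, 0; 1, 0])
    (g : Matrix (Fin 2) (Fin 2) ℝ) (hg : g = !![a, b; c, d]) :
    (¬ LinearIndependent ℝ ![g * Y - Y * g, g * H, g * X] ↔ a ^ 2 = 1) ∧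
    (Y - g⁻¹ * Y * g ∈ Submodule.span ℝ ({H, X} : Set (Matrix (Fin 2) (Fin 2) ℝ))
      ↔ (a = 1 ∨ a = -1)) := by
  subst hH hX hY hg
  have hinv : (!![a, b; c, d] : Matrix (Fin 2) (Fin 2) ℝ)⁻¹ = !![d, -b; -c, a] := by
    apply Matrix.inv_eq_right_inv
    ext i j
    fin_cases i <;> fin_cases j <;> simp [Matrix.mul_apply, Fin.sum_univ_two] <;> linarith
  refine ⟨?_, ?_⟩
  · rw [Fintype.linearIndependent_iff]
    constructor
    · intro h
      by_contra ha
      apply h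
      intro f hf
      simp only [Fin.sum_univ_three] at hf
      have e00 := congrFun (congrFun hf 0) 0
      have e01 := congrFun (congrFun hf 0) 1
      have e10 := congrFun (congrFun hf 1) 0
      have e11 := congrFun (congrFun hf 1) 1
      simp [Matrix.mul_apply, Fin.sum_univ_two] at e00 e01 e10 e11
      have h0 : f 0 = 0 := by
        have : f 0 * (1 - a ^ 2) = 0 := by
          linear_combination (-c) * e00 + a * e10 - f 0 * hdet
        rcases mul_eq_zero.mp this with h | h
        · exact h
        · exact absurd (by linarith) ha
      rw [h0] at e00 e10 e11
      have h1 : f 1 = 0 := by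
        linear_combination d * e00 - b * e10 - f 1 * hdet
      rw [h1] at e01 e11
      have h2 : f 2 = 0 := by
        linear_combination d * e01 - b * e11 - f 2 * hdet
      intro i
      fin_cases i
      · exact h0
      · exact h1
      · exact h2
    · intro ha h
      have := h ![1, -(a * b), -(b ^ 2)] (by
        simp only [Fin.sum_univ_three]
        ext i j
        fin_cases i <;> fin_cases j <;> simp [Matrix.mul_apply, Fin.sum_univ_two]
        · linear_combination (-b) * ha
        · ring
        · linear_combination a * hdet - d * ha
        · linear_combination b * hdet) 0
      simp at this
  · rw [hinv, Submodule.mem_span_pair, ← (show a ^ 2 = 1 ↔ a = 1 ∨ a = -1 from by simp)]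
    constructor
    · rintro ⟨x, y, h⟩
      have e10 := congrFun (congrFun h 1) 0
      simp [Matrix.mul_apply, Fin.sum_univ_two] at e10
      linarith
    · intro ha
      refine ⟨a * b, b ^ 2, ?_⟩
      ext i j
      fin_cases i <;> fin_cases j <;> simp [Matrix.mul_apply, Fin.sum_univ_two]
      all_goals first | ring1 | linear_combination ha
end

section
/- Let X = [[0,1],[0,0]], Y = [[0,0],[1,0]] in the 2×2 real matrices, and let g = [[a,b],[c,d]] with ad − bc = 1. Then X − g⁻¹Xg belongs to the span of {X, Y} if and only if c·d = 0. -/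
/-- Singular locus of the ARS on SL(2,ℝ) defined by Δ = span{X,Y} and
D = −ad(X): for g = [[a,b],[c,d]] with det g = 1, one has
X − g⁻¹Xg ∈ span{X,Y} iff c·d = 0. -/
theorem singular_locus_SL2_second
    (a b c d : ℝ) (hdet : a * d - b * c = 1)
    (X : Matrix (Fin 2) (Fin 2) ℝ) (hX : X = !![0, 1; 0, 0])
    (Y : Matrix (Fin 2) (Fin 2) ℝ) (hY : Y = !![0, 0; 1, 0])
    (g : Matrix (Fin 2) (Fin 2) ℝ) (hg : g = !![a, b; c, d]) :
    X - g⁻¹ * X * g ∈ Submodule.span ℝ ({X, Y} : Set (Matrix (Fin 2) (Fin 2) ℝ))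
      ↔ c * d = 0 := by
  have hinv : g⁻¹ = !![d, -b; -c, a] := by
    apply Matrix.inv_eq_left_inv
    subst hg
    ext i j
    fin_cases i <;> fin_cases j <;> simp [Matrix.mul_apply, Fin.sum_univ_two] <;> linarith
  have hF : X - g⁻¹ * X * g = !![-(c * d), 1 - d ^ 2; c ^ 2, c * d] := by
    rw [hinv, hX, hg]
    ext i j
    fin_cases i <;> fin_cases j <;> simp [Matrix.mul_apply, Fin.sum_univ_two] <;> ring
  rw [hF, Submodule.mem_span_pair, hX, hY]
  constructor
  · rintro ⟨p, q, h⟩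
    have h1 := congrFun (congrFun h 1) 1
    simp only [Matrix.add_apply, Matrix.smul_apply, Matrix.of_apply, Matrix.cons_val',
      Matrix.cons_val_one, Matrix.cons_val_fin_one, smul_eq_mul, mul_zero, add_zero] at h1
    exact h1.symm
  · intro h
    refine ⟨1 - d ^ 2, c ^ 2, ?_⟩
    rw [h]
    ext i j
    fin_cases i <;> fin_cases j <;> simp
end
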